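/- Under hypotheses (H0)–(H3), with n₀ ≥ 2 fixed so that c²γ^{n₀} < 1, for every i ∈ {1,…,n₀} the functions x ↦ E_x(| liminf_{n→∞} (1/n) Σ_{l=1}^n Z_{i+l n₀}² − σ² | ∧ 1) and x ↦ E_x(| limsup_{n→∞} (1/n) Σ_{l=1}^n Z_{i+l n₀}² − σ² | ∧ 1) are Lipschitz continuous on E (in particular continuous). -/

import Mathlib

open MeasureTheory ProbabilityTheory Filter Bornology
open scoped ENNReal NNReal Topology

variable {E : Type*} [MeasurableSpace E] [MetricSpace E] [CompleteSpace E]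
  [SecondCountableTopology E] [BorelSpace E]

/-- The Markov operator acting on functions: `Pf(x) = ∫ f(y) π(x, dy)`. -/
noncomputable def Pfun (π : Kernel E E) (f : E → ℝ) : E → ℝ := fun x => ∫ y, f y ∂(π x)

/-- The Markov operator acting on measures (the transfer operator `ν ↦ νP`). -/
noncomputable def Pmeas (π : Kernel E E) (ν : MeasureTheory.Measure E) :
    MeasureTheory.Measure E := ν.bind (fun x => π x)

/-- `ν ∈ M_{1,1}`: a Borel probability measure with finite first moment. -/
def FiniteFirstMoment (ν : MeasureTheory.Measure E) : Prop :=
  IsProbabilityMeasure ν ∧ ∃ x₀ : E, Integrable (fun x => dist x₀ x) ν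

/-- The Wasserstein (dual-Lipschitz) distance between two measures. -/
noncomputable def wassDist (ν₁ ν₂ : MeasureTheory.Measure E) : ℝ :=
  sSup {r : ℝ | ∃ f : E → ℝ, LipschitzWith 1 f ∧ r = |∫ x, f x ∂ν₁ - ∫ x, f x ∂ν₂|}

/-- The natural filtration of the coordinate process on `ℕ → E`. -/
def natFilt : Filtration ℕ (MeasurableSpace.pi : MeasurableSpace (ℕ → E)) :=
  Filtration.natural (fun k (ω : ℕ → E) => ω k)
    (fun k => (measurable_pi_apply k).stronglyMeasurable)

/-- `ℙ` is the law of the Markov chain on `E^ℕ` with transition probability `π` and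
initial distribution `ν`. -/
structure IsMarkovChainLaw (π : Kernel E E) (ν : MeasureTheory.Measure E)
    (P : MeasureTheory.Measure (ℕ → E)) : Prop where
  prob : IsProbabilityMeasure P
  init : P.map (fun ω => ω 0) = ν
  markov : ∀ (n : ℕ) (g : E → ℝ), Measurable g → IsBounded (Set.range g) →
    P[(fun ω => g (ω (n + 1))) | natFilt n] =ᵐ[P] fun ω => ∫ y, g y ∂(π (ω n))

/-- The corrector function `χ = ∑_{i≥0} Pⁱψ`. -/
noncomputable def chiFun (π : Kernel E E) (ψ : E → ℝ) : E → ℝ :=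
  fun x => ∑' i : ℕ, (Pfun π)^[i] ψ x

/-- The martingale `S_n = χ(X_n) - χ(X_0) + ∑_{i=0}^n ψ(X_i)` as a function of the trajectory. -/
noncomputable def SFun (π : Kernel E E) (ψ : E → ℝ) (n : ℕ) : (ℕ → E) → ℝ :=
  fun ω => chiFun π ψ (ω n) - chiFun π ψ (ω 0) + ∑ i ∈ Finset.range (n + 1), ψ (ω i)

/-- The martingale differences `Z_n = χ(X_n) - χ(X_{n-1}) + ψ(X_n)`. -/
noncomputable def ZFun (π : Kernel E E) (ψ : E → ℝ) (n : ℕ) : (ℕ → E) → ℝ :=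
  fun ω => chiFun π ψ (ω n) - chiFun π ψ (ω (n - 1)) + ψ (ω n)

set_option linter.unusedSectionVars false

/-! ### Multi-step Markov kernels -/

/-- The `k`-step transition kernel. -/
noncomputable def kpow (π : Kernel E E) : ℕ → Kernel E E
  | 0 => Kernel.id
  | k + 1 => π ∘ₖ kpow π k

instance kpow_markov (π : Kernel E E) [IsMarkovKernel π] (k : ℕ) : IsMarkovKernel (kpow π k) := by
  induction k with
  | zero => unfold kpow; infer_instance
  | succ k ih => unfold kpow; infer_instance

lemma Pmeas_iter (π : Kernel E E) (k : ℕ) (ν : Measure E) :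
    (Pmeas π)^[k] ν = kpow π k ∘ₘ ν := by
  induction k with
  | zero => simp [kpow]
  | succ k ih =>
    rw [Function.iterate_succ_apply', ih, kpow, ← Measure.comp_assoc]
    rfl

lemma Pmeas_iter_dirac (π : Kernel E E) (k : ℕ) (x : E) :
    (Pmeas π)^[k] (Measure.dirac x) = kpow π k x := by
  rw [Pmeas_iter, Measure.dirac_bind (Kernel.measurable _)]

lemma ffm_integrable {ν : Measure E} (h : FiniteFirstMoment ν) {f : E → ℝ} {L : ℝ≥0}
    (hf : LipschitzWith L f) : Integrable f ν := by
  obtain ⟨hp, x₀, hx⟩ := h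
  refine Integrable.mono' ((integrable_const |f x₀|).add (hx.const_mul (L : ℝ)))
    hf.continuous.aestronglyMeasurable (Eventually.of_forall fun x => ?_)
  have := hf.dist_le_mul x₀ x
  rw [Real.dist_eq] at this
  simp only [Pi.add_apply, Real.norm_eq_abs]
  have h2 : |f x| ≤ |f x₀| + |f x₀ - f x| := by
    have := abs_sub_abs_le_abs_sub (f x) (f x₀)
    rw [abs_sub_comm] at this
    linarith
  linarith

lemma ffm_dirac (x : E) : FiniteFirstMoment (Measure.dirac x) :=
  ⟨inferInstance, x, by
    refine integrable_dirac ?_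
    simp⟩

lemma ffm_iter {π : Kernel E E}
    (hH1 : ∀ ν : Measure E, FiniteFirstMoment ν → FiniteFirstMoment (Pmeas π ν))
    (k : ℕ) {ν : Measure E} (h : FiniteFirstMoment ν) : FiniteFirstMoment ((Pmeas π)^[k] ν) := by
  induction k with
  | zero => exact h
  | succ k ih => rw [Function.iterate_succ_apply']; exact hH1 _ ih

lemma wass_bdd {ν₁ ν₂ : Measure E} (h₁ : FiniteFirstMoment ν₁) (h₂ : FiniteFirstMoment ν₂) :
    BddAbove {r : ℝ | ∃ f : E → ℝ, LipschitzWith 1 f ∧ r = |∫ x, f x ∂ν₁ - ∫ x, f x ∂ν₂|} := by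
  obtain ⟨hp₁, x₀, hx₁⟩ := id h₁
  have hp₂ := h₂.1
  have hx₂ : Integrable (fun x => dist x₀ x) ν₂ := ffm_integrable h₂ (LipschitzWith.dist_right x₀)
  refine ⟨∫ x, dist x₀ x ∂ν₁ + ∫ x, dist x₀ x ∂ν₂, ?_⟩
  rintro r ⟨f, hf, rfl⟩
  have key : ∀ ν : Measure E, IsProbabilityMeasure ν → Integrable (fun x => dist x₀ x) ν →
      Integrable f ν → |∫ x, f x ∂ν - f x₀| ≤ ∫ x, dist x₀ x ∂ν := by
    intro ν _ hd hfi
    have : ∫ x, f x ∂ν - f x₀ = ∫ x, (f x - f x₀) ∂ν := by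
      rw [integral_sub hfi (integrable_const _)]; simp
    rw [this]
    refine (abs_integral_le_integral_abs).trans ?_
    refine integral_mono ((hfi.sub (integrable_const _)).abs) hd fun x => ?_
    have := hf.dist_le_mul x x₀
    rw [Real.dist_eq] at this
    simpa [dist_comm] using this
  have a := key ν₁ hp₁ hx₁ (ffm_integrable h₁ hf)
  have b := key ν₂ hp₂ hx₂ (ffm_integrable h₂ hf)
  rw [abs_le] at *
  constructor <;> linarith [a.1, a.2, b.1, b.2]

lemma wass_lip {ν₁ ν₂ : Measure E} (h₁ : FiniteFirstMoment ν₁) (h₂ : FiniteFirstMoment ν₂)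
    {f : E → ℝ} {L : ℝ≥0} (hf : LipschitzWith L f) :
    |∫ x, f x ∂ν₁ - ∫ x, f x ∂ν₂| ≤ L * wassDist ν₁ ν₂ := by
  have hp₁ := h₁.1
  have hp₂ := h₂.1
  rcases eq_or_ne L 0 with rfl | hL
  · have hne : Nonempty E := by
      obtain ⟨_, x₀, _⟩ := h₁
      exact ⟨x₀⟩
    obtain ⟨x₀⟩ := hne
    have : f = fun _ => f x₀ := by
      funext x
      have := hf.dist_le_mul x x₀
      simpa using this
    rw [this]; simp
  · have hL' : (0 : ℝ) < L := by positivity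
    have h : LipschitzWith 1 (fun x => (L : ℝ)⁻¹ * f x) := by
      refine LipschitzWith.of_dist_le_mul fun x y => ?_
      have := hf.dist_le_mul x y
      rw [Real.dist_eq] at *
      rw [← mul_sub, abs_mul, abs_of_pos (inv_pos.2 hL'), inv_mul_le_iff₀ hL']
      simpa using this
    have := le_csSup (wass_bdd h₁ h₂) ⟨_, h, rfl⟩
    rw [integral_const_mul, integral_const_mul, ← mul_sub, abs_mul, abs_of_pos (inv_pos.2 hL'),
      inv_mul_le_iff₀ hL'] at this
    exact this

lemma wass_dirac (x y : E) : wassDist (Measure.dirac x) (Measure.dirac y) ≤ dist x y := by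
  refine csSup_le ⟨_, fun _ => 0, LipschitzWith.const' 0, rfl⟩ ?_
  rintro r ⟨f, hf, rfl⟩
  rw [integral_dirac, integral_dirac]
  simpa [Real.dist_eq] using hf.dist_le_mul x y

/-- Contraction of the `k`-step kernel on Lipschitz functions. -/
lemma kpow_lip {π : Kernel E E} {γ c : ℝ} (hγ : γ ∈ Set.Ioo (0 : ℝ) 1) (hc : 0 < c)
    (hH1 : ∀ ν : Measure E, FiniteFirstMoment ν → FiniteFirstMoment (Pmeas π ν))
    (hH2 : ∀ n : ℕ, 1 ≤ n → ∀ ν₁ ν₂ : Measure E, FiniteFirstMoment ν₁ →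
      FiniteFirstMoment ν₂ →
      wassDist ((Pmeas π)^[n] ν₁) ((Pmeas π)^[n] ν₂) ≤ c * γ ^ n * wassDist ν₁ ν₂)
    (k : ℕ) (hk : 1 ≤ k) {f : E → ℝ} {L : ℝ≥0} (hf : LipschitzWith L f) (x y : E) :
    |∫ z, f z ∂(kpow π k x) - ∫ z, f z ∂(kpow π k y)| ≤ L * (c * γ ^ k * dist x y) := by
  rw [← Pmeas_iter_dirac, ← Pmeas_iter_dirac]
  refine (wass_lip (ffm_iter hH1 k (ffm_dirac x)) (ffm_iter hH1 k (ffm_dirac y)) hf).trans ?_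
  refine mul_le_mul_of_nonneg_left ?_ L.2
  refine (hH2 k hk _ _ (ffm_dirac x) (ffm_dirac y)).trans ?_
  have := hγ.1
  exact mul_le_mul_of_nonneg_left (wass_dirac x y) (by positivity)

lemma Pfun_iter {π : Kernel E E}
    (hH1 : ∀ ν : Measure E, FiniteFirstMoment ν → FiniteFirstMoment (Pmeas π ν))
    {ψ : E → ℝ} {L : ℝ≥0} (hψ : LipschitzWith L ψ) (k : ℕ) (x : E) :
    (Pfun π)^[k] ψ x = ∫ z, ψ z ∂(kpow π k x) := by
  induction k generalizing x with
  | zero => simp [kpow, Kernel.id_apply]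
  | succ k ih =>
    rw [Function.iterate_succ_apply', Pfun]
    simp_rw [ih]
    rw [← Pmeas_iter_dirac, Function.iterate_succ_apply, Pmeas_iter]
    have h1 : Pmeas π (Measure.dirac x) = π x := by
      rw [Pmeas, Measure.dirac_bind (Kernel.measurable _)]
    have h2 : Integrable ψ (kpow π k ∘ₘ π x) := by
      rw [← h1, ← Pmeas_iter]
      exact ffm_integrable (ffm_iter hH1 k (hH1 _ (ffm_dirac x))) hψ
    rw [← Kernel.comp_apply] at h2
    rw [h1, ← Kernel.comp_apply, Kernel.integral_comp h2]

lemma chi_lip {π : Kernel E E} {γ c : ℝ} (hγ : γ ∈ Set.Ioo (0 : ℝ) 1) (hc : 0 < c)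
    (hH1 : ∀ ν : Measure E, FiniteFirstMoment ν → FiniteFirstMoment (Pmeas π ν))
    (hH2 : ∀ n : ℕ, 1 ≤ n → ∀ ν₁ ν₂ : Measure E, FiniteFirstMoment ν₁ →
      FiniteFirstMoment ν₂ →
      wassDist ((Pmeas π)^[n] ν₁) ((Pmeas π)^[n] ν₂) ≤ c * γ ^ n * wassDist ν₁ ν₂)
    {μstar : Measure E} (hμstar : FiniteFirstMoment μstar) (hinv : Pmeas π μstar = μstar)
    {ψ : E → ℝ} {L : ℝ≥0} (hψ : LipschitzWith L ψ) (hψ0 : ∫ x, ψ x ∂μstar = 0) :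
    ∃ K : ℝ, 0 ≤ K ∧ ∀ x y, |chiFun π ψ x - chiFun π ψ y| ≤ K * dist x y := by
  have hγ0 := hγ.1
  have hgeo : Summable (fun k : ℕ => γ ^ k) := summable_geometric_of_lt_one hγ.1.le hγ.2
  have hsum : ∀ x, Summable (fun k : ℕ => (Pfun π)^[k] ψ x) := by
    intro x
    rw [← summable_nat_add_iff 1]
    refine Summable.of_norm_bounded
      (g := fun k : ℕ => γ ^ (k + 1) * (L * c * wassDist (Measure.dirac x) μstar))
      (((summable_nat_add_iff 1).2 hgeo).mul_right _) fun k => ?_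
    have hit : (Pmeas π)^[k + 1] μstar = μstar := Function.iterate_fixed hinv _
    have := wass_lip (ffm_iter hH1 (k + 1) (ffm_dirac x)) (ffm_iter hH1 (k + 1) hμstar) hψ
    have h2 := hH2 (k + 1) (by omega) _ _ (ffm_dirac x) hμstar
    rw [Pfun_iter hH1 hψ, ← Pmeas_iter_dirac, Real.norm_eq_abs]
    rw [hit] at this h2
    rw [hψ0, sub_zero] at this
    refine this.trans ((mul_le_mul_of_nonneg_left h2 L.2).trans (le_of_eq ?_))
    simp only [NNReal.val_eq_coe]
    ring
  set G : ℕ → ℝ := fun k => if k = 0 then L else L * (c * γ ^ k) with hG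
  have hGs : Summable G := by
    rw [← summable_nat_add_iff 1]
    simp only [hG, Nat.add_eq_zero_iff, one_ne_zero, and_false, if_false]
    exact (((summable_nat_add_iff 1).2 hgeo).mul_left c).mul_left _
  have hG0 : ∀ k, 0 ≤ G k := by
    intro k
    simp only [hG]
    split_ifs <;> positivity
  refine ⟨∑' k, G k, tsum_nonneg hG0, fun x y => ?_⟩
  rw [chiFun, chiFun, ← (hsum x).tsum_sub (hsum y), ← Real.norm_eq_abs, ← tsum_mul_right]
  refine tsum_of_norm_bounded (hGs.mul_right _).hasSum fun k => ?_
  rcases Nat.eq_zero_or_pos k with rfl | hk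
  · simpa [hG, Real.dist_eq] using hψ.dist_le_mul x y
  · rw [Pfun_iter hH1 hψ, Pfun_iter hH1 hψ, Real.norm_eq_abs]
    refine (kpow_lip hγ hc hH1 hH2 k hk hψ x y).trans (le_of_eq ?_)
    simp only [hG, hk.ne', if_false]
    ring

/-! ### The Markov property on sampled times -/

lemma markov_one {π : Kernel E E} [IsMarkovKernel π] {ν : Measure E} {P : Measure (ℕ → E)}
    (hP : IsMarkovChainLaw π ν P) (n : ℕ) {A : Set (ℕ → E)} (hA : MeasurableSet[natFilt n] A) :
    (P.restrict A).map (fun ω => ω (n + 1)) = π ∘ₘ ((P.restrict A).map (fun ω => ω n)) := by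
  have := hP.prob
  ext B hB
  have hm : ∀ k, Measurable (fun ω : ℕ → E => ω k) := fun k => measurable_pi_apply k
  rw [Measure.map_apply (hm _) hB, Measure.bind_apply hB (Kernel.aemeasurable _),
    lintegral_map (Kernel.measurable_coe _ hB) (hm _)]
  have hb : IsBounded (Set.range (B.indicator (fun _ => (1 : ℝ)))) := by
    refine (Metric.isBounded_Icc (0 : ℝ) 1).subset ?_
    rintro _ ⟨x, rfl⟩
    by_cases hx : x ∈ B <;> simp [hx]
  have h1 := hP.markov n (B.indicator (fun _ => 1)) (measurable_const.indicator hB) hb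
  have hle : natFilt (E := E) n ≤ MeasurableSpace.pi := (natFilt (E := E)).le n
  have hint : Integrable (fun ω : ℕ → E => B.indicator (fun _ => (1 : ℝ)) (ω (n + 1))) P := by
    refine Integrable.of_bound (C := 1)
      ((measurable_const.indicator hB).comp (hm (n + 1))).aestronglyMeasurable
      (Eventually.of_forall fun ω => ?_)
    by_cases hx : ω (n + 1) ∈ B <;> simp [hx]
  have h2 := setIntegral_condExp hle hint hA
  have h3 : ∫ ω in A, (P[(fun ω => B.indicator (fun _ => (1 : ℝ)) (ω (n + 1))) | natFilt n]) ω ∂P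
      = ∫ ω in A, (π (ω n)).real B ∂P := by
    refine integral_congr_ae (ae_restrict_of_ae ?_)
    filter_upwards [h1] with ω hω
    rw [hω, integral_indicator_const _ hB]; simp
  rw [h3] at h2
  have h4 : ∫ ω in A, B.indicator (fun _ => (1 : ℝ)) (ω (n + 1)) ∂P
      = (P.restrict A).real ((fun ω : ℕ → E => ω (n + 1)) ⁻¹' B) := by
    have : (fun ω : ℕ → E => B.indicator (fun _ => (1 : ℝ)) (ω (n + 1)))
      = ((fun ω : ℕ → E => ω (n + 1)) ⁻¹' B).indicator (fun _ => 1) := rfl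
    rw [this, integral_indicator_const _ (hm _ hB)]; simp
  rw [h4] at h2
  have h5 : ∫ ω in A, (π (ω n)).real B ∂P = (∫⁻ ω in A, π (ω n) B ∂P).toReal := by
    simp only [measureReal_def]
    rw [integral_toReal]
    · exact ((Kernel.measurable_coe _ hB).comp (hm n)).aemeasurable
    · exact Eventually.of_forall fun ω => measure_lt_top _ _
  rw [h5, measureReal_def] at h2
  have hfin : ∫⁻ ω in A, π (ω n) B ∂P ≠ ⊤ := by
    refine ne_top_of_le_ne_top (b := ∫⁻ ω in A, 1 ∂P) ?_ (lintegral_mono fun ω => prob_le_one)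
    simp
  exact ((ENNReal.toReal_eq_toReal_iff' hfin (measure_ne_top _ _)).1 h2).symm

lemma markov_k {π : Kernel E E} [IsMarkovKernel π] {ν : Measure E} {P : Measure (ℕ → E)}
    (hP : IsMarkovChainLaw π ν P) (n k : ℕ) {A : Set (ℕ → E)} (hA : MeasurableSet[natFilt n] A) :
    (P.restrict A).map (fun ω => ω (n + k)) = kpow π k ∘ₘ ((P.restrict A).map (fun ω => ω n)) := by
  induction k with
  | zero => simp [kpow]
  | succ k ih =>
    have := markov_one hP (n + k) ((natFilt (E := E)).mono (Nat.le_add_right n k) _ hA)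
    rw [← add_assoc, this, ih, Measure.comp_assoc, kpow]

/-- The chain sampled at the times `t 0, t 1, …` and frozen after index `n`. -/
def frz (t : ℕ → ℕ) (n : ℕ) (ω : ℕ → E) : ℕ → E := fun j => ω (t (min j n))

/-- Keep the coordinates `≤ n`, replace all the others by `y`. -/
def glue (n : ℕ) (a : ℕ → E) (y : E) : ℕ → E := fun j => if j ≤ n then a j else y

lemma frz_succ (t : ℕ → ℕ) (n : ℕ) (ω : ℕ → E) :
    frz t (n + 1) ω = glue n (frz t n ω) (ω (t (n + 1))) := by
  funext j
  simp only [frz, glue]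
  split_ifs with h
  · rw [min_eq_left h, min_eq_left (by omega)]
  · rw [min_eq_right (by omega)]

lemma measurable_frz (t : ℕ → ℕ) (n : ℕ) : Measurable (frz (E := E) t n) :=
  measurable_pi_lambda _ fun _ => measurable_pi_apply _

lemma measurable_frz_nat {t : ℕ → ℕ} (ht : Monotone t) (n : ℕ) :
    Measurable[natFilt (E := E) (t n)] (frz (E := E) t n) := by
  refine @measurable_pi_lambda _ _ _ (natFilt (E := E) (t n)) _ _ fun j => ?_
  have h1 : Measurable[natFilt (E := E) (t n)] (fun ω : ℕ → E => ω (t (min j n))) := by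
    have h : MeasurableSpace.comap (fun ω : ℕ → E => ω (t (min j n))) inferInstance
        ≤ natFilt (E := E) (t n) := by
      have hle : t (min j n) ≤ t n := ht (min_le_right _ _)
      have := le_iSup₂ (f := fun (k : ℕ) (_ : k ≤ t n) =>
        MeasurableSpace.comap (fun ω : ℕ → E => ω k) inferInstance) (t (min j n)) hle
      exact this
    exact measurable_iff_comap_le.2 h
  exact h1

lemma measurable_glue (n : ℕ) : Measurable (fun p : (ℕ → E) × E => glue n p.1 p.2) := by
  refine measurable_pi_lambda _ fun j => ?_
  unfold glue
  split_ifs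
  · exact (measurable_pi_apply j).comp measurable_fst
  · exact measurable_snd

lemma joint_law {π : Kernel E E} [IsMarkovKernel π] {ν : Measure E} {P : Measure (ℕ → E)}
    (hP : IsMarkovChainLaw π ν P) {t : ℕ → ℕ} (ht : Monotone t) (n k : ℕ)
    (hk : t (n + 1) = t n + k) :
    P.map (fun ω => (frz t n ω, ω (t (n + 1)))) =
      (P.map (frz t n)) ⊗ₘ ((kpow π k).comap (fun a : ℕ → E => a n) (measurable_pi_apply n)) := by
  have := hP.prob
  have hm : ∀ k, Measurable (fun ω : ℕ → E => ω k) := fun k => measurable_pi_apply k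
  have hf := measurable_frz (E := E) t n
  refine Measure.ext_prod fun {A B} hA hB => ?_
  rw [Measure.compProd_apply_prod hA hB, Measure.map_apply (hf.prodMk (hm _)) (hA.prod hB),
    Measure.restrict_map hf hA, lintegral_map (Kernel.measurable_coe _ hB) hf]
  have hk' := markov_k hP (t n) k (measurable_frz_nat ht n hA)
  have h2 := congrArg (fun m : Measure E => m B) hk'
  rw [Measure.map_apply (hm _) hB, Measure.bind_apply hB (Kernel.aemeasurable _),
    lintegral_map (Kernel.measurable_coe _ hB) (hm _), Measure.restrict_apply (hm _ hB)] at h2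
  simp only [Kernel.comap_apply]
  have h3 : ∀ ω : ℕ → E, frz t n ω n = ω (t n) := fun ω => by simp [frz]
  simp_rw [h3]
  rw [← h2, hk]
  congr 1
  ext ω
  simp [and_comm]

/-- Integrating out the last sampled coordinate. -/
noncomputable def stepOp (π : Kernel E E) (k n : ℕ) (h : (ℕ → E) → ℝ) (a : ℕ → E) : ℝ :=
  ∫ y, h (glue n a y) ∂(kpow π k (a n))

lemma expect_step {π : Kernel E E} [IsMarkovKernel π] {ν : Measure E} {P : Measure (ℕ → E)}
    (hP : IsMarkovChainLaw π ν P) {t : ℕ → ℕ} (ht : Monotone t) (n k : ℕ)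
    (hk : t (n + 1) = t n + k) {h : (ℕ → E) → ℝ} (hh : Measurable h) {B : ℝ}
    (hB : ∀ a, |h a| ≤ B) :
    ∫ ω, h (frz t (n + 1) ω) ∂P = ∫ ω, stepOp π k n h (frz t n ω) ∂P := by
  have := hP.prob
  have hf := measurable_frz (E := E) t n
  have hg : Measurable (fun p : (ℕ → E) × E => h (glue n p.1 p.2)) := hh.comp (measurable_glue n)
  have hpm : Measurable (fun ω : ℕ → E => (frz t n ω, ω (t (n + 1)))) :=
    hf.prodMk (measurable_pi_apply _)
  have h1 : ∫ ω, h (frz t (n + 1) ω) ∂P =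
      ∫ p, h (glue n p.1 p.2) ∂(P.map (fun ω => (frz t n ω, ω (t (n + 1))))) := by
    rw [integral_map hpm.aemeasurable hg.aestronglyMeasurable]
    simp_rw [frz_succ]
  have : IsProbabilityMeasure (P.map (frz t n)) := Measure.isProbabilityMeasure_map hf.aemeasurable
  rw [h1, joint_law hP ht n k hk, Measure.integral_compProd]
  · simp only [Kernel.comap_apply]
    rw [integral_map hf.aemeasurable]
    · rfl
    · exact (StronglyMeasurable.integral_kernel_prod_right'
        (κ := (kpow π k).comap (fun a : ℕ → E => a n) (measurable_pi_apply n))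
        hg.stronglyMeasurable).aestronglyMeasurable
  · exact Integrable.of_bound (C := B) hg.aestronglyMeasurable
      (Eventually.of_forall fun p => hB _)

/-- `h` is Lipschitz in the coordinates `0, …, n-1` with weights `w`. -/
def WLip (n : ℕ) (w : ℕ → ℝ≥0) (h : (ℕ → E) → ℝ) : Prop :=
  ∀ a b : ℕ → E, |h a - h b| ≤ ∑ j ∈ Finset.range n, (w j : ℝ) * dist (a j) (b j)

lemma WLip.continuous {n : ℕ} {w : ℕ → ℝ≥0} {h : (ℕ → E) → ℝ} (hh : WLip n w h) :
    Continuous h := by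
  rw [continuous_iff_continuousAt]
  intro b
  rw [ContinuousAt, tendsto_iff_dist_tendsto_zero]
  have hc : Continuous (fun a : ℕ → E => ∑ j ∈ Finset.range n, (w j : ℝ) * dist (a j) (b j)) := by
    fun_prop
  have h0 := hc.tendsto b
  simp only [dist_self, mul_zero, Finset.sum_const_zero] at h0
  exact squeeze_zero (fun _ => dist_nonneg) (fun a => by rw [Real.dist_eq]; exact hh a b) h0

lemma WLip.measurable {n : ℕ} {w : ℕ → ℝ≥0} {h : (ℕ → E) → ℝ} (hh : WLip n w h) :
    Measurable h := hh.continuous.measurable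

lemma step_bdd {π : Kernel E E} [IsMarkovKernel π] (k n : ℕ) {h : (ℕ → E) → ℝ} {B : ℝ}
    (hB : ∀ a, |h a| ≤ B) (a : ℕ → E) : |stepOp π k n h a| ≤ B := by
  unfold stepOp
  have := norm_integral_le_of_norm_le_const (μ := kpow π k (a n)) (f := fun y => h (glue n a y))
    (Eventually.of_forall fun y => hB _)
  simpa using this

lemma step_lip {π : Kernel E E} [IsMarkovKernel π] (k n : ℕ) {h : (ℕ → E) → ℝ} {B : ℝ}
    (hB : ∀ a, |h a| ≤ B) {q : ℝ≥0}
    (hq : ∀ (f : E → ℝ) (L : ℝ≥0), LipschitzWith L f → ∀ x y : E,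
      |∫ z, f z ∂(kpow π k x) - ∫ z, f z ∂(kpow π k y)| ≤ L * (q * dist x y))
    {w : ℕ → ℝ≥0} (hh : WLip (n + 2) w h) :
    WLip (n + 1) (Function.update w n (w n + q * w (n + 1))) (stepOp π k n h) := by
  intro a b
  have hmeas : ∀ a : ℕ → E, Measurable (fun y => h (glue n a y)) := fun a =>
    hh.measurable.comp ((measurable_glue n).comp (measurable_const.prodMk measurable_id))
  have hint : ∀ (a : ℕ → E) (x : E), Integrable (fun y => h (glue n a y)) (kpow π k x) := by
    intro a x
    exact Integrable.of_bound (C := B) (hmeas a).aestronglyMeasurable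
      (Eventually.of_forall fun p => hB _)
  have h1 : |∫ y, h (glue n a y) ∂(kpow π k (a n)) - ∫ y, h (glue n b y) ∂(kpow π k (a n))|
      ≤ ∑ j ∈ Finset.range (n + 1), (w j : ℝ) * dist (a j) (b j) := by
    rw [← integral_sub (hint a _) (hint b _), ← Real.norm_eq_abs]
    have := norm_integral_le_of_norm_le_const (μ := kpow π k (a n))
      (f := fun y => h (glue n a y) - h (glue n b y))
      (C := ∑ j ∈ Finset.range (n + 1), (w j : ℝ) * dist (a j) (b j))
      (Eventually.of_forall fun y => by
        refine (hh _ _).trans ?_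
        rw [Finset.sum_range_succ]
        simp only [glue, Nat.not_succ_le_self, if_false, dist_self,
          mul_zero, add_zero]
        refine le_of_eq (Finset.sum_congr rfl fun j hj => ?_)
        have : j ≤ n := by simpa [Nat.lt_succ_iff] using hj
        simp [this])
    simpa using this
  have hl : LipschitzWith (w (n + 1)) (fun y => h (glue n b y)) := by
    refine LipschitzWith.of_dist_le_mul fun x y => ?_
    rw [Real.dist_eq]
    refine (hh _ _).trans ?_
    rw [Finset.sum_range_succ, Finset.sum_eq_zero]
    · simp [glue]
    · intro j hj
      have : j ≤ n := by simpa [Nat.lt_succ_iff] using hj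
      simp [glue, this]
  have h2 := hq _ _ hl (a n) (b n)
  have h3 : |stepOp π k n h a - stepOp π k n h b| ≤
      |∫ y, h (glue n a y) ∂(kpow π k (a n)) - ∫ y, h (glue n b y) ∂(kpow π k (a n))| +
      |∫ y, h (glue n b y) ∂(kpow π k (a n)) - ∫ y, h (glue n b y) ∂(kpow π k (b n))| :=
    abs_sub_le _ _ _
  refine h3.trans ((add_le_add h1 h2).trans (le_of_eq ?_))
  rw [Finset.sum_range_succ, Finset.sum_range_succ]
  have : ∑ j ∈ Finset.range n, ((Function.update w n (w n + q * w (n + 1)) j : ℝ≥0) : ℝ)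
      * dist (a j) (b j) = ∑ j ∈ Finset.range n, (w j : ℝ) * dist (a j) (b j) := by
    refine Finset.sum_congr rfl fun j hj => ?_
    rw [Function.update_of_ne (by simp at hj; omega)]
  rw [this, Function.update_self]
  push_cast
  ring

/-- Key estimate: expectations of weighted Lipschitz functionals are Lipschitz in the initial
point, with explicit constant. -/
lemma expect_lip {π : Kernel E E} [IsMarkovKernel π] {Ppt : E → Measure (ℕ → E)}
    (hPpt : ∀ x : E, IsMarkovChainLaw π (Measure.dirac x) (Ppt x))
    {t g : ℕ → ℕ} (ht0 : t 0 = 0) (htg : ∀ n, t (n + 1) = t n + g n) {q : ℕ → ℝ≥0}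
    (hq : ∀ (n : ℕ) (f : E → ℝ) (L : ℝ≥0), LipschitzWith L f → ∀ x y : E,
      |∫ z, f z ∂(kpow π (g n) x) - ∫ z, f z ∂(kpow π (g n) y)| ≤ L * (q n * dist x y))
    {B : ℝ} (n : ℕ) (w : ℕ → ℝ≥0) (h : (ℕ → E) → ℝ) (hh : WLip (n + 1) w h)
    (hB : ∀ a, |h a| ≤ B) (x y : E) :
    |∫ ω, h (frz t n ω) ∂(Ppt x) - ∫ ω, h (frz t n ω) ∂(Ppt y)| ≤
      (∑ j ∈ Finset.range (n + 1), (w j : ℝ) * ∏ k ∈ Finset.range j, (q k : ℝ)) * dist x y := by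
  have ht : Monotone t := monotone_nat_of_le_succ fun n => by rw [htg]; omega
  induction n generalizing w h with
  | zero =>
    have key : ∀ x, ∫ ω, h (frz t 0 ω) ∂(Ppt x) = h (fun _ => x) := by
      intro x
      have hi := (hPpt x).init
      have hm : Measurable (fun z : E => h (fun _ => z)) :=
        hh.measurable.comp (measurable_pi_lambda _ fun _ => measurable_id)
      have : ∫ ω, h (frz t 0 ω) ∂(Ppt x)
          = ∫ z, h (fun _ => z) ∂((Ppt x).map (fun ω => ω 0)) := by
        rw [integral_map (measurable_pi_apply 0).aemeasurable hm.aestronglyMeasurable]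
        refine integral_congr_ae (Eventually.of_forall fun ω => ?_)
        have he : frz t 0 ω = fun _ => ω 0 := by
          funext j
          simp [frz, ht0]
        simp only [he]
      rw [this, hi, integral_dirac]
    rw [key, key]
    simpa using hh (fun _ => x) (fun _ => y)
  | succ n ih =>
    rw [expect_step (hPpt x) ht n (g n) (htg n) hh.measurable hB,
      expect_step (hPpt y) ht n (g n) (htg n) hh.measurable hB]
    refine (ih _ _ (step_lip (g n) n hB (hq n) hh) (step_bdd _ _ hB)).trans (le_of_eq ?_)
    congr 1
    rw [Finset.sum_range_succ, Finset.sum_range_succ _ (n + 1), Finset.sum_range_succ _ n,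
      Finset.prod_range_succ]
    have : ∑ j ∈ Finset.range n, ((Function.update w n (w n + q n * w (n + 1)) j : ℝ≥0) : ℝ)
        * ∏ k ∈ Finset.range j, (q k : ℝ)
        = ∑ j ∈ Finset.range n, (w j : ℝ) * ∏ k ∈ Finset.range j, (q k : ℝ) := by
      refine Finset.sum_congr rfl fun j hj => ?_
      rw [Function.update_of_ne (by simp at hj; omega)]
    rw [this, Function.update_self]
    push_cast
    ring

/-! ### Tail functionals have a law not depending on the starting point -/

lemma tendsto_iInf_liminf {u : ℕ → ℝ} (h0 : ∀ n, 0 ≤ u n) (h1 : ∀ n, u n ≤ 1) :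
    Tendsto (fun m => ⨅ i, u (m + i)) atTop (𝓝 (liminf u atTop)) := by
  have hb : IsBoundedUnder (· ≥ ·) atTop u := isBoundedUnder_of ⟨0, h0⟩
  have hb' : IsBoundedUnder (· ≤ ·) atTop u := isBoundedUnder_of ⟨1, h1⟩
  have hbd : ∀ m, BddBelow (Set.range fun i => u (m + i)) := fun m =>
    ⟨0, by rintro _ ⟨i, rfl⟩; exact h0 _⟩
  rw [tendsto_order]
  constructor
  · intro a ha
    obtain ⟨b, hab, hb2⟩ := exists_between ha
    have hev := eventually_lt_of_lt_liminf hb2 hb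
    obtain ⟨M, hM⟩ := eventually_atTop.1 hev
    filter_upwards [eventually_ge_atTop M] with m hm
    refine hab.trans_le (le_ciInf fun i => (hM _ (by omega)).le)
  · intro a ha
    refine Eventually.of_forall fun m => lt_of_le_of_lt ?_ ha
    refine le_liminf_of_le hb'.isCoboundedUnder_ge ?_
    filter_upwards [eventually_ge_atTop m] with n hn
    have := ciInf_le (hbd m) (n - m)
    rwa [Nat.add_sub_of_le hn] at this

/-- The minimum of `u m, …, u (m+N)`. -/
noncomputable def minTo (u : ℕ → ℝ) (m N : ℕ) : ℝ :=
  (Finset.range (N + 1)).inf' ⟨0, by simp⟩ (fun i => u (m + i))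

lemma minTo_lip {u v : ℕ → ℝ} {m N : ℕ} {ε : ℝ} (h : ∀ i ≤ N, |u (m + i) - v (m + i)| ≤ ε) :
    |minTo u m N - minTo v m N| ≤ ε := by
  have key : ∀ u v : ℕ → ℝ, (∀ i ≤ N, |u (m + i) - v (m + i)| ≤ ε) →
      minTo u m N - ε ≤ minTo v m N := by
    intro u v h
    unfold minTo
    refine Finset.le_inf' _ _ fun i hi => ?_
    have h1 := Finset.inf'_le (fun i => u (m + i)) hi
    have h2 := (abs_le.1 (h i (by simp at hi; omega))).2
    linarith
  have h1 := key u v h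
  have h2 := key v u (fun i hi => by rw [abs_sub_comm]; exact h i hi)
  rw [abs_le]
  constructor <;> linarith

lemma tendsto_minTo {u : ℕ → ℝ} (h0 : ∀ n, 0 ≤ u n) (m : ℕ) :
    Tendsto (fun N => minTo u m N) atTop (𝓝 (⨅ i, u (m + i))) := by
  have hbd : BddBelow (Set.range fun i => u (m + i)) :=
    ⟨0, by rintro _ ⟨i, rfl⟩; exact h0 _⟩
  rw [tendsto_order]
  constructor
  · intro a ha
    refine Eventually.of_forall fun N => ha.trans_le ?_
    unfold minTo
    exact Finset.le_inf' _ _ fun i _ => ciInf_le hbd i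
  · intro a ha
    obtain ⟨i, hi⟩ := exists_lt_of_ciInf_lt ha
    filter_upwards [eventually_ge_atTop i] with N hN
    refine lt_of_le_of_lt ?_ hi
    unfold minTo
    exact Finset.inf'_le (fun i => u (m + i)) (by simp; omega)

/-- The sampled chain. -/
def smp (t : ℕ → ℕ) (ω : ℕ → E) : ℕ → E := fun j => ω (t j)

lemma measurable_smp (t : ℕ → ℕ) : Measurable (smp (E := E) t) :=
  measurable_pi_lambda _ fun _ => measurable_pi_apply _

lemma tail_expect {π : Kernel E E} [IsMarkovKernel π] {Ppt : E → Measure (ℕ → E)}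
    (hPpt : ∀ x : E, IsMarkovChainLaw π (Measure.dirac x) (Ppt x))
    {t g : ℕ → ℕ} (ht0 : t 0 = 0) (htg : ∀ n, t (n + 1) = t n + g n) {q : ℕ → ℝ≥0}
    (hq : ∀ (n : ℕ) (f : E → ℝ) (L : ℝ≥0), LipschitzWith L f → ∀ x y : E,
      |∫ z, f z ∂(kpow π (g n) x) - ∫ z, f z ∂(kpow π (g n) y)| ≤ L * (q n * dist x y))
    {A : ℝ} (hA : ∀ N, ∑ j ∈ Finset.range N, ∏ k ∈ Finset.range j, (q k : ℝ) ≤ A)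
    {D : ℕ → (ℕ → E) → ℝ} (hD0 : ∀ n a, 0 ≤ D n a) (hD1 : ∀ n a, D n a ≤ 1) {C : ℝ≥0}
    (hD : ∀ n, 1 ≤ n → ∀ a b, |D n a - D n b| ≤
      C / √n * ∑ j ∈ Finset.range (2 * n + 1), dist (a j) (b j))
    {φ : ℝ → ℝ} {K : ℝ≥0} (hφ : LipschitzWith K φ) {B : ℝ} (hB : ∀ v, |φ v| ≤ B) (x y : E) :
    ∫ ω, φ (liminf (fun n => D n (smp t ω)) atTop) ∂(Ppt x) =
      ∫ ω, φ (liminf (fun n => D n (smp t ω)) atTop) ∂(Ppt y) := by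
  have hDm : ∀ m, 1 ≤ m → ∀ a b N, ∀ i ≤ N, |D (m + i) a - D (m + i) b| ≤
      C / √m * ∑ j ∈ Finset.range (2 * (m + N) + 1), dist (a j) (b j) := by
    intro m hm a b N i hi
    refine (hD (m + i) (by omega) a b).trans ?_
    have hm' : (0 : ℝ) < √m := by
      rw [Real.sqrt_pos]; exact_mod_cast hm
    gcongr
    all_goals first | omega | simp
  have hmeas : ∀ m, 1 ≤ m → Measurable (D m) := by
    intro m hm
    refine WLip.measurable (n := 2 * m + 1) (w := fun _ => C / NNReal.sqrt m) fun a b => ?_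
    refine (hD m hm a b).trans (le_of_eq ?_)
    rw [← Finset.mul_sum]
    simp
  -- the functionals
  have hW : ∀ m, 1 ≤ m → ∀ N, WLip (2 * (m + N) + 1) (fun _ => K * (C / NNReal.sqrt m))
      (fun a : ℕ → E => φ (minTo (fun n => D n a) m N)) := by
    intro m hm N a b
    have h1 := hφ.dist_le_mul (minTo (fun n => D n a) m N) (minTo (fun n => D n b) m N)
    rw [Real.dist_eq, Real.dist_eq] at h1
    refine h1.trans ?_
    rw [← Finset.mul_sum]
    push_cast
    rw [mul_assoc]
    refine mul_le_mul_of_nonneg_left ?_ K.2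
    have := minTo_lip (u := fun n => D n a) (v := fun n => D n b) (m := m) (N := N)
      (fun i hi => hDm m hm a b N i hi)
    simpa using this
  have hfs : ∀ m, 1 ≤ m → ∀ N (ω : ℕ → E),
      minTo (fun n => D n (frz t (2 * (m + N)) ω)) m N = minTo (fun n => D n (smp t ω)) m N := by
    intro m hm N ω
    have := minTo_lip (u := fun n => D n (frz t (2 * (m + N)) ω)) (v := fun n => D n (smp t ω))
      (m := m) (N := N) (fun i hi => hDm m hm _ _ N i hi)
    rw [Finset.sum_eq_zero, mul_zero] at this
    · exact sub_eq_zero.1 (abs_nonpos_iff.1 this)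
    · intro j hj
      have : j ≤ 2 * (m + N) := by simpa [Nat.lt_succ_iff] using hj
      simp [frz, smp, this]
  have e1 : ∀ m, 1 ≤ m → ∀ N,
      |∫ ω, φ (minTo (fun n => D n (smp t ω)) m N) ∂(Ppt x) -
        ∫ ω, φ (minTo (fun n => D n (smp t ω)) m N) ∂(Ppt y)| ≤
      K * (C / √m) * A * dist x y := by
    intro m hm N
    have := expect_lip hPpt ht0 htg hq (2 * (m + N)) _ _ (hW m hm N) (fun a => hB _) x y
    simp only [hfs m hm N] at this
    refine this.trans ?_
    rw [← Finset.mul_sum]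
    push_cast
    gcongr
    exact hA _
  have hpr : ∀ x, IsProbabilityMeasure (Ppt x) := fun x => (hPpt x).prob
  have l1 : ∀ m, 1 ≤ m → ∀ x, Tendsto
      (fun N => ∫ ω, φ (minTo (fun n => D n (smp t ω)) m N) ∂(Ppt x)) atTop
      (𝓝 (∫ ω, φ (⨅ i, D (m + i) (smp t ω)) ∂(Ppt x))) := by
    intro m hm x
    refine tendsto_integral_of_dominated_convergence (fun _ => B) (fun N => ?_)
      (integrable_const B) (fun N => Eventually.of_forall fun ω => hB _)
      (Eventually.of_forall fun ω => ?_)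
    · exact ((hW m hm N).measurable.comp (measurable_smp t)).aestronglyMeasurable
    · exact (hφ.continuous.tendsto _).comp
        (tendsto_minTo (u := fun n => D n (smp t ω)) (fun n => hD0 _ _) m)
  have e2 : ∀ m : ℕ, 1 ≤ m →
      |∫ ω, φ (⨅ i, D (m + i) (smp t ω)) ∂(Ppt x) - ∫ ω, φ (⨅ i, D (m + i) (smp t ω)) ∂(Ppt y)| ≤
      K * (C / √m) * A * dist x y := by
    intro m hm
    exact le_of_tendsto ((l1 m hm x).sub (l1 m hm y)).abs (Eventually.of_forall (e1 m hm))
  have l2 : ∀ x, Tendsto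
      (fun m => ∫ ω, φ (⨅ i, D (m + 1 + i) (smp t ω)) ∂(Ppt x)) atTop
      (𝓝 (∫ ω, φ (liminf (fun n => D n (smp t ω)) atTop) ∂(Ppt x))) := by
    intro x
    refine tendsto_integral_of_dominated_convergence (fun _ => B) (fun m => ?_)
      (integrable_const B) (fun N => Eventually.of_forall fun ω => hB _)
      (Eventually.of_forall fun ω => ?_)
    · refine (hφ.continuous.measurable.comp ?_).aestronglyMeasurable
      exact Measurable.iInf fun i => (hmeas (m + 1 + i) (by omega)).comp (measurable_smp t)
    · exact (hφ.continuous.tendsto _).comp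
        ((tendsto_iInf_liminf (u := fun n => D n (smp t ω)) (fun n => hD0 _ _)
          (fun n => hD1 _ _)).comp (tendsto_add_atTop_nat 1))
  have l3 : Tendsto (fun m : ℕ => K * (C / √((m + 1 : ℕ) : ℝ)) * A * dist x y) atTop (𝓝 0) := by
    have h1 : Tendsto (fun m : ℕ => √((m + 1 : ℕ) : ℝ)) atTop atTop :=
      Real.tendsto_sqrt_atTop.comp (tendsto_natCast_atTop_atTop.comp (tendsto_add_atTop_nat 1))
    have h2 : Tendsto (fun m : ℕ => (C : ℝ) / √((m + 1 : ℕ) : ℝ)) atTop (𝓝 0) :=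
      tendsto_const_nhds.div_atTop h1
    simpa using ((h2.const_mul (K : ℝ)).mul_const A).mul_const (dist x y)
  have := le_of_tendsto_of_tendsto' ((l2 x).sub (l2 y)).abs l3 (fun m => e2 (m + 1) (by omega))
  exact sub_eq_zero.1 (abs_nonpos_iff.1 this)

lemma tail_law {π : Kernel E E} [IsMarkovKernel π] {Ppt : E → Measure (ℕ → E)}
    (hPpt : ∀ x : E, IsMarkovChainLaw π (Measure.dirac x) (Ppt x))
    {t g : ℕ → ℕ} (ht0 : t 0 = 0) (htg : ∀ n, t (n + 1) = t n + g n) {q : ℕ → ℝ≥0}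
    (hq : ∀ (n : ℕ) (f : E → ℝ) (L : ℝ≥0), LipschitzWith L f → ∀ x y : E,
      |∫ z, f z ∂(kpow π (g n) x) - ∫ z, f z ∂(kpow π (g n) y)| ≤ L * (q n * dist x y))
    {A : ℝ} (hA : ∀ N, ∑ j ∈ Finset.range N, ∏ k ∈ Finset.range j, (q k : ℝ) ≤ A)
    {D : ℕ → (ℕ → E) → ℝ} (hD0 : ∀ n a, 0 ≤ D n a) (hD1 : ∀ n a, D n a ≤ 1) {C : ℝ≥0}
    (hDm : ∀ n, Measurable (D n))
    (hD : ∀ n, 1 ≤ n → ∀ a b, |D n a - D n b| ≤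
      C / √n * ∑ j ∈ Finset.range (2 * n + 1), dist (a j) (b j))
    {Φ : ℝ → ℝ} (hΦ : Measurable Φ) (x y : E) :
    ∫ ω, Φ (liminf (fun n => D n (smp t ω)) atTop) ∂(Ppt x) =
      ∫ ω, Φ (liminf (fun n => D n (smp t ω)) atTop) ∂(Ppt y) := by
  have hpr : ∀ x, IsProbabilityMeasure (Ppt x) := fun x => (hPpt x).prob
  have hV : Measurable (fun ω : ℕ → E => liminf (fun n => D n (smp t ω)) atTop) :=
    Measurable.liminf fun n => (hDm n).comp (measurable_smp t)
  have hlaw : (Ppt x).map (fun ω : ℕ → E => liminf (fun n => D n (smp t ω)) atTop) =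
      (Ppt y).map (fun ω : ℕ → E => liminf (fun n => D n (smp t ω)) atTop) := by
    have : ∀ x, IsProbabilityMeasure
        ((Ppt x).map (fun ω : ℕ → E => liminf (fun n => D n (smp t ω)) atTop)) :=
      fun x => Measure.isProbabilityMeasure_map hV.aemeasurable
    refine Measure.ext_of_charFun ?_
    funext s
    have key : ∀ x, charFun ((Ppt x).map
        (fun ω : ℕ → E => liminf (fun n => D n (smp t ω)) atTop)) s =
        ((∫ ω, Real.cos (s * liminf (fun n => D n (smp t ω)) atTop) ∂(Ppt x) : ℝ) : ℂ) +
        ((∫ ω, Real.sin (s * liminf (fun n => D n (smp t ω)) atTop) ∂(Ppt x) : ℝ) : ℂ)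
          * Complex.I := by
      intro x
      rw [charFun_apply_real, integral_map hV.aemeasurable
        (by fun_prop), ← integral_complex_ofReal, ← integral_complex_ofReal, ← integral_mul_const, ← integral_add]
      · refine integral_congr_ae (Eventually.of_forall fun ω => ?_)
        simp only
        rw [Complex.ofReal_cos, Complex.ofReal_sin, ← Complex.exp_mul_I, Complex.ofReal_mul]
      · refine Integrable.ofReal (Integrable.of_bound (C := 1) ?_ ?_)
        · exact (Real.measurable_cos.comp (hV.const_mul s)).aestronglyMeasurable
        · exact Eventually.of_forall fun ω => Real.abs_cos_le_one _
      · refine (Integrable.ofReal (Integrable.of_bound (C := 1) ?_ ?_)).mul_const _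
        · exact (Real.measurable_sin.comp (hV.const_mul s)).aestronglyMeasurable
        · exact Eventually.of_forall fun ω => Real.abs_sin_le_one _
    have hmul : LipschitzWith (Real.nnabs s) (fun v : ℝ => s * v) :=
      LipschitzWith.of_dist_le_mul fun a b => by
        rw [Real.dist_eq, Real.dist_eq, ← mul_sub, abs_mul]; simp
    have hcos := tail_expect hPpt ht0 htg hq hA hD0 hD1 hD
      (Real.lipschitzWith_cos.comp hmul) (B := 1) (fun v => Real.abs_cos_le_one _) x y
    have hsin := tail_expect hPpt ht0 htg hq hA hD0 hD1 hD
      (Real.lipschitzWith_sin.comp hmul) (B := 1) (fun v => Real.abs_sin_le_one _) x y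
    simp only [Function.comp_apply] at hcos hsin
    rw [key, key, hcos, hsin]
  rw [← integral_map (f := Φ) hV.aemeasurable hΦ.aestronglyMeasurable, hlaw,
    integral_map hV.aemeasurable hΦ.aestronglyMeasurable]

/-! ### A compactification of `[0, ∞)` compatible with the conventions for real `liminf` -/

/-- The increasing map `u ↦ √u / (1 + √u)`. -/
noncomputable def wf (u : ℝ) : ℝ := √u / (1 + √u)

lemma wf_nonneg (u : ℝ) : 0 ≤ wf u := by unfold wf; positivity

lemma wf_lt_one (u : ℝ) : wf u < 1 := by
  unfold wf
  have := Real.sqrt_nonneg u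
  rw [div_lt_one (by positivity)]
  linarith

lemma wf_le_one (u : ℝ) : wf u ≤ 1 := (wf_lt_one u).le

lemma wf_cont : Continuous wf := by
  unfold wf
  refine Continuous.div (by fun_prop) (by fun_prop) fun u => ?_
  have := Real.sqrt_nonneg u
  positivity

lemma wf_mono : Monotone wf := by
  intro u v huv
  unfold wf
  have h := Real.sqrt_le_sqrt huv
  have h1 := Real.sqrt_nonneg u
  have h2 := Real.sqrt_nonneg v
  rw [div_le_div_iff₀ (by positivity) (by positivity)]
  nlinarith

lemma wf_inv {u : ℝ} (hu : 0 ≤ u) : (wf u / (1 - wf u)) ^ 2 = u := by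
  have h1 := Real.sqrt_nonneg u
  have h : wf u / (1 - wf u) = √u := by
    have h3 : (1 + √u) ≠ 0 := by positivity
    have h2 : 1 - wf u = 1 / (1 + √u) := by
      unfold wf
      field_simp
      ring
    rw [h2]
    unfold wf
    field_simp
  rw [h, Real.sq_sqrt hu]

lemma wf_sub (u v : ℝ) : |wf u - wf v| ≤ |√u - √v| := by
  have h1 := Real.sqrt_nonneg u
  have h2 := Real.sqrt_nonneg v
  have h : wf u - wf v = (√u - √v) / ((1 + √u) * (1 + √v)) := by
    unfold wf
    field_simp
    ring
  rw [h, abs_div, abs_of_pos (show 0 < (1 + √u) * (1 + √v) by positivity)]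
  refine div_le_self (abs_nonneg _) ?_
  nlinarith [mul_nonneg h1 h2]

lemma wf_exists {b : ℝ} (hb : b < 1) : ∃ M, 0 ≤ M ∧ b ≤ wf M := by
  have h : Tendsto (fun r : ℝ => r / (1 + r)) atTop (𝓝 1) := by
    have h1 : Tendsto (fun r : ℝ => 1 - 1 / (1 + r)) atTop (𝓝 (1 - 0)) :=
      tendsto_const_nhds.sub (tendsto_const_nhds.div_atTop (tendsto_atTop_add_const_left _ _ tendsto_id))
    rw [sub_zero] at h1
    refine h1.congr' ?_
    filter_upwards [eventually_ge_atTop 0] with r hr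
    field_simp
    ring
  have h2 := (h.comp Real.tendsto_sqrt_atTop).eventually (eventually_ge_nhds hb)
  obtain ⟨M, hM, hM0⟩ := (h2.and (eventually_ge_atTop 0)).exists
  exact ⟨M, hM0, hM⟩

lemma liminf_wf {u : ℕ → ℝ} (hu : ∀ n, 0 ≤ u n) :
    liminf u atTop = (liminf (fun n => wf (u n)) atTop /
      (1 - liminf (fun n => wf (u n)) atTop)) ^ 2 := by
  have hb : IsBoundedUnder (· ≥ ·) atTop u := isBoundedUnder_of ⟨0, hu⟩
  by_cases hc : IsCoboundedUnder (· ≥ ·) atTop u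
  · have h := wf_mono.map_liminf_of_continuousAt u wf_cont.continuousAt hc hb
    have h' : liminf (fun n => wf (u n)) atTop = wf (liminf u atTop) := h.symm
    have h0 : 0 ≤ liminf u atTop := le_liminf_of_le hc (Eventually.of_forall hu)
    rw [h', wf_inv h0]
  · have hev : ∀ M : ℝ, ∀ᶠ n in atTop, M ≤ u n := by
      intro M
      by_contra hM
      refine hc ?_
      rw [not_eventually] at hM
      exact IsCoboundedUnder.of_frequently_le (a := M) (hM.mono fun n hn => (not_le.1 hn).le)
    have h0 : liminf u atTop = 0 := by
      rw [liminf_eq]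
      have : {a | ∀ᶠ n in atTop, a ≤ u n} = Set.univ := Set.eq_univ_of_forall hev
      rw [this, Real.sSup_univ]
    have h1 : liminf (fun n => wf (u n)) atTop = 1 := by
      refine Tendsto.liminf_eq ?_
      rw [tendsto_order]
      refine ⟨fun b hb1 => ?_, fun b hb1 => Eventually.of_forall fun n => (wf_lt_one _).trans hb1⟩
      obtain ⟨b', hbb, hb'⟩ := exists_between hb1
      obtain ⟨M, _, hM⟩ := wf_exists hb'
      filter_upwards [hev M] with n hn
      exact hbb.trans_le (hM.trans (wf_mono hn))
    rw [h0, h1]; simp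

lemma limsup_wf {u : ℕ → ℝ} (hu : ∀ n, 0 ≤ u n) :
    limsup u atTop = ((1 - liminf (fun n => 1 - wf (u n)) atTop) /
      (1 - (1 - liminf (fun n => 1 - wf (u n)) atTop))) ^ 2 := by
  have hV : 1 - liminf (fun n => 1 - wf (u n)) atTop = limsup (fun n => wf (u n)) atTop := by
    have ha : Antitone (fun v : ℝ => 1 - v) := fun a b hab => by
      show 1 - b ≤ 1 - a
      linarith
    have hb1 : IsBoundedUnder (· ≤ ·) atTop (fun n => 1 - wf (u n)) :=
      isBoundedUnder_of ⟨1, fun n => by linarith [wf_nonneg (u n)]⟩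
    have hb2 : IsBoundedUnder (· ≥ ·) atTop (fun n => 1 - wf (u n)) :=
      isBoundedUnder_of ⟨0, fun n => by
        have := wf_le_one (u n)
        show 1 - wf (u n) ≥ 0
        linarith⟩
    have h := ha.map_liminf_of_continuousAt (F := atTop) (fun n => 1 - wf (u n))
      (by fun_prop) hb1.isCoboundedUnder_ge hb2
    rw [h]
    congr 1
    funext n
    simp
  rw [hV]
  have hb : IsBoundedUnder (· ≥ ·) atTop u := isBoundedUnder_of ⟨0, hu⟩
  by_cases hc : IsBoundedUnder (· ≤ ·) atTop u
  · have h := wf_mono.map_limsup_of_continuousAt u wf_cont.continuousAt hc hb.isCoboundedUnder_le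
    have h' : limsup (fun n => wf (u n)) atTop = wf (limsup u atTop) := h.symm
    have h0 : 0 ≤ limsup u atTop :=
      le_limsup_of_frequently_le (Eventually.of_forall hu).frequently hc
    rw [h', wf_inv h0]
  · have hev : ∀ M : ℝ, ¬ ∀ᶠ n in atTop, u n ≤ M := fun M hM => hc ⟨M, hM⟩
    have h0 : limsup u atTop = 0 := by
      rw [limsup_eq]
      have : {a | ∀ᶠ n in atTop, u n ≤ a} = ∅ := Set.eq_empty_of_forall_notMem hev
      rw [this, Real.sInf_empty]
    have hb1 : IsBoundedUnder (· ≤ ·) atTop (fun n => wf (u n)) :=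
      isBoundedUnder_of ⟨1, fun n => wf_le_one (u n)⟩
    have hb2 : IsBoundedUnder (· ≥ ·) atTop (fun n => wf (u n)) :=
      isBoundedUnder_of ⟨0, fun n => wf_nonneg (u n)⟩
    have h1 : limsup (fun n => wf (u n)) atTop = 1 := by
      refine le_antisymm (limsup_le_of_le hb2.isCoboundedUnder_le
        (Eventually.of_forall fun n => wf_le_one _)) ?_
      refine le_of_forall_lt fun b hb3 => ?_
      obtain ⟨b', hbb, hb'⟩ := exists_between hb3
      obtain ⟨M, _, hM⟩ := wf_exists hb'
      refine hbb.trans_le (le_limsup_of_frequently_le ?_ hb1)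
      have := hev M
      rw [not_eventually] at this
      exact this.mono fun n hn => hM.trans (wf_mono (not_le.1 hn).le)
    rw [h0, h1]; simp

/-! ### The quadratic functionals -/

/-- The averaged squares, as a functional of the sampled chain. -/
noncomputable def SS (χ ψ : E → ℝ) (n : ℕ) (a : ℕ → E) : ℝ :=
  (1 / (n : ℝ)) * ∑ l ∈ Finset.Icc 1 n, (χ (a (2 * l)) - χ (a (2 * l - 1)) + ψ (a (2 * l))) ^ 2

lemma SS_nonneg (χ ψ : E → ℝ) (n : ℕ) (a : ℕ → E) : 0 ≤ SS χ ψ n a := by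
  unfold SS; positivity

lemma measurable_SS {χ ψ : E → ℝ} (hχ : Measurable χ) (hψ : Measurable ψ) (n : ℕ) :
    Measurable (SS χ ψ n) := by
  unfold SS
  fun_prop

lemma sqrt_sum_le (s : Finset ℕ) (z z' : ℕ → ℝ) :
    √(∑ l ∈ s, z l ^ 2) ≤ √(∑ l ∈ s, z' l ^ 2) + ∑ l ∈ s, |z l - z' l| := by
  set Y := √(∑ l ∈ s, z' l ^ 2) with hY
  set Δ := ∑ l ∈ s, |z l - z' l| with hΔ
  have hY0 : 0 ≤ Y := Real.sqrt_nonneg _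
  have hΔ0 : 0 ≤ Δ := Finset.sum_nonneg fun _ _ => abs_nonneg _
  have hY2 : Y ^ 2 = ∑ l ∈ s, z' l ^ 2 := Real.sq_sqrt (Finset.sum_nonneg fun _ _ => sq_nonneg _)
  refine Real.sqrt_le_iff.2 ⟨by positivity, ?_⟩
  have h : ∀ l ∈ s, z l ^ 2 ≤ z' l ^ 2 + (2 * Y + Δ) * |z l - z' l| := by
    intro l hl
    have h1 : |z' l| ≤ Y := Real.abs_le_sqrt
      (Finset.single_le_sum (f := fun l => z' l ^ 2) (fun _ _ => sq_nonneg _) hl)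
    have h2 : |z l - z' l| ≤ Δ :=
      Finset.single_le_sum (f := fun l => |z l - z' l|) (fun _ _ => abs_nonneg _) hl
    have h3 : z l ^ 2 = z' l ^ 2 + 2 * (z' l * (z l - z' l)) + |z l - z' l| ^ 2 := by
      rw [sq_abs]; ring
    have h4 : z' l * (z l - z' l) ≤ Y * |z l - z' l| := by
      refine (le_abs_self _).trans ?_
      rw [abs_mul]
      exact mul_le_mul_of_nonneg_right h1 (abs_nonneg _)
    have h5 : |z l - z' l| ^ 2 ≤ Δ * |z l - z' l| := by
      rw [sq]
      exact mul_le_mul_of_nonneg_right h2 (abs_nonneg _)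
    rw [h3]
    linarith
  refine (Finset.sum_le_sum h).trans (le_of_eq ?_)
  rw [Finset.sum_add_distrib, ← Finset.mul_sum, ← hY2, ← hΔ]
  ring

lemma SS_lip {χ ψ : E → ℝ} {K : ℝ} (hK : 0 ≤ K) (hχ : ∀ x y, |χ x - χ y| ≤ K * dist x y)
    {L : ℝ≥0} (hψ : LipschitzWith L ψ) (n : ℕ) (a b : ℕ → E) :
    |wf (SS χ ψ n a) - wf (SS χ ψ n b)| ≤
      ((⟨K, hK⟩ + L : ℝ≥0) : ℝ) / √n * ∑ j ∈ Finset.range (2 * n + 1), dist (a j) (b j) := by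
  refine (wf_sub _ _).trans ?_
  set z : (ℕ → E) → ℕ → ℝ := fun a l => χ (a (2 * l)) - χ (a (2 * l - 1)) + ψ (a (2 * l)) with hz
  have hS : ∀ a, √(SS χ ψ n a) = (1 / √n) * √(∑ l ∈ Finset.Icc 1 n, z a l ^ 2) := by
    intro a
    unfold SS
    rw [Real.sqrt_mul (by positivity), Real.sqrt_div zero_le_one, Real.sqrt_one]
  rw [hS, hS, ← mul_sub, abs_mul, abs_of_nonneg (show (0 : ℝ) ≤ 1 / √n by positivity),
    div_mul_eq_mul_div, div_mul_eq_mul_div, one_mul]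
  refine div_le_div_of_nonneg_right ?_ (Real.sqrt_nonneg _)
  have h1 := sqrt_sum_le (Finset.Icc 1 n) (z a) (z b)
  have h2 := sqrt_sum_le (Finset.Icc 1 n) (z b) (z a)
  simp_rw [abs_sub_comm (z b _) (z a _)] at h2
  have h3 : ∑ l ∈ Finset.Icc 1 n, |z a l - z b l| ≤
      ((⟨K, hK⟩ + L : ℝ≥0) : ℝ) * ∑ j ∈ Finset.range (2 * n + 1), dist (a j) (b j) := by
    have hKe : ((⟨K, hK⟩ + L : ℝ≥0) : ℝ) = K + L := rfl
    rw [hKe]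
    clear h1 h2 hS
    induction n with
    | zero =>
      simp only [Finset.Icc_eq_empty_of_lt zero_lt_one, Finset.sum_empty]
      positivity
    | succ n ih =>
      rw [Finset.sum_Icc_succ_top (by omega), show 2 * (n + 1) + 1 = 2 * n + 1 + 1 + 1 by ring,
        Finset.sum_range_succ _ (2 * n + 1 + 1), Finset.sum_range_succ _ (2 * n + 1)]
      have e1 := hχ (a (2 * (n + 1))) (b (2 * (n + 1)))
      have e2 := hχ (a (2 * n + 1)) (b (2 * n + 1))
      have e3 := hψ.dist_le_mul (a (2 * (n + 1))) (b (2 * (n + 1)))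
      rw [Real.dist_eq] at e3
      have e4 : |z a (n + 1) - z b (n + 1)| ≤
          |χ (a (2 * (n + 1))) - χ (b (2 * (n + 1)))| + |χ (a (2 * n + 1)) - χ (b (2 * n + 1))|
          + |ψ (a (2 * (n + 1))) - ψ (b (2 * (n + 1)))| := by
        simp only [hz, show 2 * (n + 1) - 1 = 2 * n + 1 by omega]
        refine (le_of_eq ?_).trans ((abs_add_le _ _).trans (add_le_add_left (abs_sub _ _) _))
        congr 1
        ring
      have e5 : 0 ≤ (L : ℝ) * dist (a (2 * n + 1)) (b (2 * n + 1)) := by positivity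
      have e6 : 2 * n + 1 + 1 = 2 * (n + 1) := by ring
      rw [e6]
      nlinarith [e1, e2, e3, e4, e5, ih]
  rw [abs_le]
  constructor <;> linarith

/-! ### Sampling times -/

/-- Gaps between consecutive sampling times. -/
def gapF (i n₀ k : ℕ) : ℕ := if k = 0 then i + n₀ - 1 else if k % 2 = 1 then 1 else n₀ - 1

/-- The sampling times `0, i + n₀ - 1, i + n₀, i + 2 n₀ - 1, i + 2 n₀, …`. -/
def timeF (i n₀ j : ℕ) : ℕ := ∑ k ∈ Finset.range j, gapF i n₀ k

lemma timeF_eq (i n₀ : ℕ) (hn : 2 ≤ n₀) (l : ℕ) (hl : 1 ≤ l) :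
    timeF i n₀ (2 * l) = i + l * n₀ ∧ timeF i n₀ (2 * l - 1) = i + l * n₀ - 1 := by
  induction l, hl using Nat.le_induction with
  | base =>
    simp [timeF, Finset.sum_range_succ, gapF]
    omega
  | succ l hl ih =>
    have h1 : timeF i n₀ (2 * (l + 1) - 1) = timeF i n₀ (2 * l) + gapF i n₀ (2 * l) := by
      rw [show 2 * (l + 1) - 1 = 2 * l + 1 by omega]
      exact Finset.sum_range_succ _ _
    have h2 : timeF i n₀ (2 * (l + 1)) = timeF i n₀ (2 * (l + 1) - 1) + gapF i n₀ (2 * l + 1) := by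
      rw [show 2 * (l + 1) - 1 = 2 * l + 1 by omega]
      exact Finset.sum_range_succ _ _
    have g1 : gapF i n₀ (2 * l) = n₀ - 1 := by
      unfold gapF
      rw [if_neg (by omega), if_neg (by omega)]
    have g2 : gapF i n₀ (2 * l + 1) = 1 := by
      unfold gapF
      rw [if_neg (by omega), if_pos (by omega)]
    rw [h2, h1, g1, g2, ih.1, Nat.succ_mul]
    omega

lemma prod_sum_bdd {q : ℕ → ℝ≥0} {r : ℝ} (hr0 : 0 ≤ r) (hr : r < 1)
    (hq : ∀ j, (q (j + 1) : ℝ) * q (j + 2) = r) :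
    ∃ A : ℝ, ∀ N, ∑ j ∈ Finset.range N, ∏ k ∈ Finset.range j, (q k : ℝ) ≤ A := by
  set Q : ℕ → ℝ := fun j => ∏ k ∈ Finset.range j, (q k : ℝ) with hQ
  have hQ0 : ∀ j, 0 ≤ Q j := fun j => Finset.prod_nonneg fun _ _ => NNReal.coe_nonneg _
  have hrec : ∀ j, Q (j + 3) = r * Q (j + 1) := by
    intro j
    simp only [hQ]
    rw [Finset.prod_range_succ, Finset.prod_range_succ, ← hq j]
    ring
  have hM0 : 0 ≤ (Q 1 + Q 2) / (1 - r) :=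
    div_nonneg (add_nonneg (hQ0 1) (hQ0 2)) (by linarith)
  have hM : Q 1 + Q 2 + r * ((Q 1 + Q 2) / (1 - r)) = (Q 1 + Q 2) / (1 - r) := by
    have : 1 - r ≠ 0 := by linarith
    field_simp
    ring
  have key : ∀ N, ∑ j ∈ Finset.range N, Q (j + 1) ≤ (Q 1 + Q 2) / (1 - r) := by
    intro N
    induction N using Nat.twoStepInduction with
    | zero => simpa using hM0
    | one =>
      simp only [Finset.sum_range_one, zero_add]
      nlinarith [hQ0 2, mul_nonneg hr0 hM0]
    | more N ih _ =>
      rw [Finset.sum_range_succ', Finset.sum_range_succ']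
      simp only [add_assoc, Nat.reduceAdd, zero_add]
      simp_rw [hrec]
      rw [← Finset.mul_sum]
      nlinarith [mul_le_mul_of_nonneg_left ih hr0]
  refine ⟨(Q 1 + Q 2) / (1 - r) + Q 0, fun N => ?_⟩
  have h1 : ∑ j ∈ Finset.range N, Q j ≤ ∑ j ∈ Finset.range (N + 1), Q j := by
    rw [Finset.sum_range_succ]
    linarith [hQ0 N]
  refine h1.trans ?_
  rw [Finset.sum_range_succ']
  linarith [key N]

/-- The functions `x ↦ E_x(|liminf (1/n)∑ Z_{i+l n₀}² - σ²| ∧ 1)` and the `limsup` analogue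
are Lipschitz continuous. -/
theorem liminf_limsup_expectations_lipschitz
    {E : Type*} [MeasurableSpace E] [MetricSpace E] [CompleteSpace E]
    [SecondCountableTopology E] [BorelSpace E]
    (π : Kernel E E) [IsMarkovKernel π] (γ c : ℝ) (hγ : γ ∈ Set.Ioo (0 : ℝ) 1) (hc : 0 < c)
    -- (H0): the Feller property
    (hH0 : ∀ f : E → ℝ, Continuous f → IsBounded (Set.range f) → Continuous (Pfun π f))
    -- (H1): `P` preserves `M_{1,1}`
    (hH1 : ∀ ν : MeasureTheory.Measure E, FiniteFirstMoment ν → FiniteFirstMoment (Pmeas π ν))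
    -- (H2): spectral gap in the Wasserstein metric
    (hH2 : ∀ n : ℕ, 1 ≤ n → ∀ ν₁ ν₂ : MeasureTheory.Measure E, FiniteFirstMoment ν₁ →
      FiniteFirstMoment ν₂ →
      wassDist ((Pmeas π)^[n] ν₁) ((Pmeas π)^[n] ν₂) ≤ c * γ ^ n * wassDist ν₁ ν₂)
    -- the chain: initial distribution `μ ∈ M_{1,1}` and its law `Pμ` on `E^ℕ`
    (μ : MeasureTheory.Measure E) (hμ : FiniteFirstMoment μ)
    (Pμ : MeasureTheory.Measure (ℕ → E)) (hPμ : IsMarkovChainLaw π μ Pμ)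
    -- (H3): uniformly bounded moments of order `2 + δ`
    (x₀ : E) (δ : ℝ) (hδ : 0 < δ)
    (hH3int : ∀ n : ℕ, Integrable (fun ω : ℕ → E => dist x₀ (ω n) ^ (2 + δ)) Pμ)
    (hH3 : ∃ M : ℝ, ∀ n : ℕ, ∫ ω : ℕ → E, dist x₀ (ω n) ^ (2 + δ) ∂Pμ ≤ M)
    -- the unique invariant measure `μ* ∈ M_{1,1}`
    (μstar : MeasureTheory.Measure E) (hμstar : FiniteFirstMoment μstar)
    (hinv : Pmeas π μstar = μstar)
    (huniq : ∀ ν : MeasureTheory.Measure E, IsProbabilityMeasure ν → Pmeas π ν = ν → ν = μstar)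
    -- `ψ` is Lipschitz with `⟨ψ, μ*⟩ = 0`
    (ψ : E → ℝ) (Lψ : ℝ≥0) (hψ : LipschitzWith Lψ ψ) (hψ0 : ∫ x, ψ x ∂μstar = 0)
    -- the law of the stationary chain, used to define `σ² = E_{μ*} Z₁²`
    (Pstar : MeasureTheory.Measure (ℕ → E)) (hPstar : IsMarkovChainLaw π μstar Pstar)
    (n₀ : ℕ) (hn₀ : 2 ≤ n₀) (hγ₀ : c ^ 2 * γ ^ n₀ < 1)
    -- `Ppt x` is the law of the chain started at `x`
    (Ppt : E → MeasureTheory.Measure (ℕ → E))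
    (hPpt : ∀ x : E, IsMarkovChainLaw π (Measure.dirac x) (Ppt x)) :
    ∀ i : ℕ, 1 ≤ i → i ≤ n₀ →
      (∃ K : ℝ≥0, LipschitzWith K (fun x : E =>
        ∫ ω, min |Filter.liminf
            (fun n : ℕ => (1 / (n : ℝ)) * ∑ l ∈ Finset.Icc 1 n, (ZFun π ψ (i + l * n₀) ω) ^ 2)
            atTop - ∫ ω', (ZFun π ψ 1 ω') ^ 2 ∂Pstar| 1 ∂(Ppt x))) ∧
      (∃ K : ℝ≥0, LipschitzWith K (fun x : E =>
        ∫ ω, min |Filter.limsup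
            (fun n : ℕ => (1 / (n : ℝ)) * ∑ l ∈ Finset.Icc 1 n, (ZFun π ψ (i + l * n₀) ω) ^ 2)
            atTop - ∫ ω', (ZFun π ψ 1 ω') ^ 2 ∂Pstar| 1 ∂(Ppt x))) := by
  intro i hi1 hi2
  have hγ0 := hγ.1
  obtain ⟨Kχ, hKχ0, hKχ⟩ := chi_lip hγ hc hH1 hH2 hμstar hinv hψ hψ0
  have hg1 : ∀ k, 1 ≤ gapF i n₀ k := by
    intro k
    unfold gapF
    split_ifs <;> omega
  set q : ℕ → ℝ≥0 := fun k => ⟨c * γ ^ gapF i n₀ k, by positivity⟩ with hqdef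
  have hq : ∀ (n : ℕ) (f : E → ℝ) (L : ℝ≥0), LipschitzWith L f → ∀ x y : E,
      |∫ z, f z ∂(kpow π (gapF i n₀ n) x) - ∫ z, f z ∂(kpow π (gapF i n₀ n) y)|
        ≤ L * (q n * dist x y) := fun n f L hf x y =>
    kpow_lip hγ hc hH1 hH2 (gapF i n₀ n) (hg1 n) hf x y
  obtain ⟨A, hA⟩ := prod_sum_bdd (q := q) (r := c ^ 2 * γ ^ n₀) (by positivity) hγ₀ (by
    intro j
    have : gapF i n₀ (j + 1) + gapF i n₀ (j + 2) = n₀ := by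
      unfold gapF
      rw [if_neg (by omega : ¬ j + 1 = 0), if_neg (by omega : ¬ j + 2 = 0)]
      by_cases h : (j + 1) % 2 = 1
      · rw [if_pos h, if_neg (by omega)]
        omega
      · rw [if_neg h, if_pos (by omega)]
        omega
    have h2 : γ ^ n₀ = γ ^ gapF i n₀ (j + 1) * γ ^ gapF i n₀ (j + 2) := by
      rw [← pow_add, this]
    rw [h2]
    show c * γ ^ gapF i n₀ (j + 1) * (c * γ ^ gapF i n₀ (j + 2)) = _
    ring)
  have hχm : Measurable (chiFun π ψ) :=
    (LipschitzWith.of_dist_le_mul (K := ⟨Kχ, hKχ0⟩) (fun x y => by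
      rw [Real.dist_eq]; exact hKχ x y)).continuous.measurable
  have hψm : Measurable ψ := hψ.continuous.measurable
  have hDm : ∀ n, Measurable (fun a : ℕ → E => wf (SS (chiFun π ψ) ψ n a)) := fun n =>
    wf_cont.measurable.comp (measurable_SS hχm hψm n)
  have hlip : ∀ n, 1 ≤ n → ∀ a b : ℕ → E,
      |wf (SS (chiFun π ψ) ψ n a) - wf (SS (chiFun π ψ) ψ n b)| ≤
      ((⟨Kχ, hKχ0⟩ + Lψ : ℝ≥0) : ℝ) / √n * ∑ j ∈ Finset.range (2 * n + 1), dist (a j) (b j) := by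
    intro n _ a b
    exact SS_lip hKχ0 hKχ hψ n a b
  have hSZ : ∀ ω : ℕ → E, (fun n : ℕ => (1 / (n : ℝ)) *
      ∑ l ∈ Finset.Icc 1 n, (ZFun π ψ (i + l * n₀) ω) ^ 2) =
      fun n => SS (chiFun π ψ) ψ n (smp (timeF i n₀) ω) := by
    intro ω
    funext n
    unfold SS
    congr 1
    refine Finset.sum_congr rfl fun l hl => ?_
    have hl1 : 1 ≤ l := (Finset.mem_Icc.1 hl).1
    obtain ⟨h1, h2⟩ := timeF_eq i n₀ hn₀ l hl1
    simp only [smp, ZFun, h1, h2]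
  simp only [hSZ]
  generalize ∫ ω', (ZFun π ψ 1 ω') ^ 2 ∂Pstar = s
  have hSS0 : ∀ n a, 0 ≤ SS (chiFun π ψ) ψ n a := fun n a => SS_nonneg _ _ _ _
  constructor
  · refine ⟨0, LipschitzWith.of_dist_le_mul fun x y => ?_⟩
    have := tail_law hPpt (t := timeF i n₀) (g := gapF i n₀) rfl
      (fun n => Finset.sum_range_succ _ _) hq hA
      (D := fun n a => wf (SS (chiFun π ψ) ψ n a)) (fun n a => wf_nonneg _)
      (fun n a => wf_le_one _) hDm hlip
      (Φ := fun v => min |(v / (1 - v)) ^ 2 - s| 1) (by fun_prop) x y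
    simp only [← liminf_wf (fun n => hSS0 n _)] at this
    rw [this]
    simp
  · refine ⟨0, LipschitzWith.of_dist_le_mul fun x y => ?_⟩
    have := tail_law hPpt (t := timeF i n₀) (g := gapF i n₀) rfl
      (fun n => Finset.sum_range_succ _ _) hq hA
      (D := fun n a => 1 - wf (SS (chiFun π ψ) ψ n a)) (fun n a => by
        linarith [wf_le_one (SS (chiFun π ψ) ψ n a)])
      (fun n a => by linarith [wf_nonneg (SS (chiFun π ψ) ψ n a)])
      (fun n => measurable_const.sub (hDm n)) (fun n hn a b => by
        have := hlip n hn a b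
        rw [sub_sub_sub_cancel_left, abs_sub_comm]
        exact this)
      (Φ := fun v => min |((1 - v) / (1 - (1 - v))) ^ 2 - s| 1) (by fun_prop) x y
    simp only [← limsup_wf (fun n => hSS0 n _)] at this
    rw [this]
    simp
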